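/- Newton's theorem: for a nonnegative spherically symmetric integrable function σ on ℝ³ and any x ∈ ℝ³ \ {0}, ∫_{ℝ³} σ(y)/|x−y| dy = ∫_{ℝ³} σ(y)/max(|x|,|y|) dy. -/

import Mathlib

open MeasureTheory

open Real Set in
/-- Polar integration of a function of the squared radius. -/
lemma lintegral_sq_add_sq {G : ℝ → ENNReal} (hG : Measurable G) :
    ∫⁻ w : ℝ × ℝ, G (w.1 ^ 2 + w.2 ^ 2) =
      ∫⁻ ρ in Ioi (0 : ℝ), ENNReal.ofReal (2 * π * ρ) * G (ρ ^ 2) := by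
  rw [← lintegral_comp_polarCoord_symm, polarCoord_target, Measure.volume_eq_prod,
    setLIntegral_prod _ (by simp only [polarCoord_symm_apply, smul_eq_mul]; fun_prop)]
  refine setLIntegral_congr_fun measurableSet_Ioi fun ρ _ ↦ ?_
  have h (θ : ℝ) : (ρ * cos θ) ^ 2 + (ρ * sin θ) ^ 2 = ρ ^ 2 := by
    linear_combination ρ ^ 2 * sin_sq_add_cos_sq θ
  simp only [polarCoord_symm_apply, smul_eq_mul, h, setLIntegral_const, Real.volume_Ioo]
  rw [ENNReal.ofReal_mul (by positivity), show π - -π = 2 * π by ring]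
  ring

open Real Set in
/-- Polar integration over the upper half plane. -/
lemma lintegral_halfPlane_polar {H : ℝ × ℝ → ENNReal} (hH : Measurable H) :
    ∫⁻ z, ∫⁻ ρ in Ioi (0 : ℝ), H (z, ρ) =
      ∫⁻ r in Ioi (0 : ℝ), ∫⁻ θ in Ioo 0 π, ENNReal.ofReal r * H (r * cos θ, r * sin θ) := by
  have hs : MeasurableSet (univ ×ˢ Ioi 0 : Set (ℝ × ℝ)) := .prod .univ measurableSet_Ioi
  have hind := hH.indicator hs
  rw [← setLIntegral_univ (fun z ↦ ∫⁻ ρ in Ioi (0 : ℝ), H (z, ρ)), ← setLIntegral_prod _ hH.aemeasurable, ← Measure.volume_eq_prod,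
    ← lintegral_indicator hs, ← lintegral_comp_polarCoord_symm, polarCoord_target,
    Measure.volume_eq_prod,
    setLIntegral_prod _ (by simp only [polarCoord_symm_apply, smul_eq_mul]; fun_prop)]
  refine setLIntegral_congr_fun measurableSet_Ioi fun r (hr : 0 < r) ↦ ?_
  rw [← inter_eq_left.2 (Ioo_subset_Ioo_left (neg_nonpos.2 pi_pos.le) : Ioo 0 π ⊆ Ioo (-π) π),
    ← setLIntegral_indicator measurableSet_Ioo]
  refine setLIntegral_congr_fun measurableSet_Ioo fun θ hθ ↦ ?_
  by_cases h0 : 0 < θ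
  · have : 0 < r * sin θ := mul_pos hr (sin_pos_of_pos_of_lt_pi h0 hθ.2)
    simp [this, h0, hθ.2]
  · have : ¬ 0 < r * sin θ := not_lt.2 <|
      mul_nonpos_of_nonneg_of_nonpos hr.le (sin_nonpos_of_nonpos_of_neg_pi_le (not_lt.1 h0) hθ.1.le)
    simp [this, h0]

open Real Set in
/-- Integration in spherical coordinates of a function on `ℝ³` that is invariant under rotations
about the first axis. -/
lemma lintegral_axisymmetric {F : ℝ × ℝ → ENNReal} (hF : Measurable F) :
    ∫⁻ y : EuclideanSpace ℝ (Fin 3), F (y 0, y 1 ^ 2 + y 2 ^ 2) =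
      ∫⁻ r in Ioi (0 : ℝ), ∫⁻ θ in Ioo 0 π,
        ENNReal.ofReal (2 * π * r ^ 2 * sin θ) * F (r * cos θ, (r * sin θ) ^ 2) := by
  have h1 := (EuclideanSpace.volume_preserving_symm_measurableEquiv_toLp (Fin 3)).lintegral_comp
    (f := fun v ↦ F (v 0, v 1 ^ 2 + v 2 ^ 2)) (by fun_prop)
  have h2 := (volume_preserving_piFinSuccAbove (fun _ : Fin 3 ↦ ℝ) 0).lintegral_comp
    (f := fun p ↦ F (p.1, p.2 0 ^ 2 + p.2 1 ^ 2)) (by fun_prop)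
  have h3 (z : ℝ) := (volume_preserving_finTwoArrow ℝ).lintegral_comp
    (f := fun w ↦ F (z, w.1 ^ 2 + w.2 ^ 2)) (by fun_prop)
  calc
    _ = ∫⁻ v : Fin 3 → ℝ, F (v 0, v 1 ^ 2 + v 2 ^ 2) := h1
    _ = ∫⁻ p : ℝ × (Fin 2 → ℝ), F (p.1, p.2 0 ^ 2 + p.2 1 ^ 2) := h2
    _ = ∫⁻ z : ℝ, ∫⁻ w : Fin 2 → ℝ, F (z, w 0 ^ 2 + w 1 ^ 2) := by
      rw [Measure.volume_eq_prod, lintegral_prod _ (by fun_prop)]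
    _ = ∫⁻ z : ℝ, ∫⁻ w : ℝ × ℝ, F (z, w.1 ^ 2 + w.2 ^ 2) := lintegral_congr h3
    _ = ∫⁻ z : ℝ, ∫⁻ ρ in Ioi (0 : ℝ), ENNReal.ofReal (2 * π * ρ) * F (z, ρ ^ 2) :=
      lintegral_congr fun z ↦ lintegral_sq_add_sq (G := fun t ↦ F (z, t)) (by fun_prop)
    _ = _ := by
      rw [lintegral_halfPlane_polar (H := fun p ↦ ENNReal.ofReal (2 * π * p.2) * F (p.1, p.2 ^ 2))
        (by fun_prop)]
      refine setLIntegral_congr_fun measurableSet_Ioi fun r (hr : 0 < r) ↦ lintegral_congr fun θ ↦ ?_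
      rw [← mul_assoc, ← ENNReal.ofReal_mul hr.le]
      ring_nf

open Real in
/-- The average of the Newton potential over a sphere, in the polar angle. -/
lemma integral_sin_div_sqrt {a r : ℝ} (ha : 0 < a) (hr : 0 < r) (hne : r ≠ a) :
    ∫ θ in (0 : ℝ)..π, sin θ / √(a ^ 2 + r ^ 2 - 2 * a * r * cos θ) = 2 / max a r := by
  have hpos (θ : ℝ) : 0 < a ^ 2 + r ^ 2 - 2 * a * r * cos θ := by
    have := sq_pos_of_ne_zero (sub_ne_zero.2 hne)
    nlinarith [mul_nonneg (mul_pos ha hr).le (sub_nonneg.2 (cos_le_one θ))]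
  have hder (θ : ℝ) : HasDerivAt (fun θ ↦ √(a ^ 2 + r ^ 2 - 2 * a * r * cos θ) / (a * r))
      (sin θ / √(a ^ 2 + r ^ 2 - 2 * a * r * cos θ)) θ := by
    refine (((((hasDerivAt_cos θ).const_mul (2 * a * r)).const_sub (a ^ 2 + r ^ 2)).sqrt
      (hpos θ).ne').div_const (a * r)).congr_deriv ?_
    have := sqrt_pos.2 (hpos θ)
    field_simp
  have hcont : Continuous fun θ ↦ sin θ / √(a ^ 2 + r ^ 2 - 2 * a * r * cos θ) :=
    continuous_sin.div (by fun_prop) fun θ ↦ (sqrt_pos.2 (hpos θ)).ne'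
  rw [intervalIntegral.integral_eq_sub_of_hasDerivAt (fun θ _ ↦ hder θ)
    (hcont.intervalIntegrable _ _), cos_pi, cos_zero,
    show a ^ 2 + r ^ 2 - 2 * a * r * -1 = (a + r) ^ 2 by ring,
    show a ^ 2 + r ^ 2 - 2 * a * r * 1 = (a - r) ^ 2 by ring,
    sqrt_sq_eq_abs, sqrt_sq_eq_abs, abs_of_pos (by positivity)]
  rcases le_total a r with h | h
  · rw [abs_of_nonpos (by linarith), max_eq_right h]
    field_simp
    ring
  · rw [abs_of_nonneg (by linarith), max_eq_left h]
    field_simp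
    ring

open Real Set in
/-- The density `1 / |x - y|` has the same integral over a sphere as `1 / max |x| |y|`. -/
lemma lintegral_sin_div_sqrt {a r : ℝ} (ha : 0 < a) (hr : 0 < r) (hne : r ≠ a) :
    ∫⁻ θ in Ioo 0 π, ENNReal.ofReal (sin θ / √(a ^ 2 + r ^ 2 - 2 * a * r * cos θ)) =
      ∫⁻ θ in Ioo 0 π, ENNReal.ofReal (sin θ / max a r) := by
  have key {g : ℝ → ℝ} (hg : ∫ θ in (0 : ℝ)..π, sin θ / g θ = 2 / max a r) (hg0 : ∀ θ, 0 ≤ g θ) :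
      ∫⁻ θ in Ioo 0 π, ENNReal.ofReal (sin θ / g θ) = ENNReal.ofReal (2 / max a r) := by
    have hinteg : IntervalIntegrable (fun θ ↦ sin θ / g θ) volume 0 π := by
      by_contra h
      rw [intervalIntegral.integral_undef h] at hg
      have : 0 < 2 / max a r := by positivity
      exact this.ne hg
    rw [← hg, intervalIntegral.integral_of_le pi_pos.le, ← restrict_Ioo_eq_restrict_Ioc,
      ofReal_integral_eq_lintegral_ofReal]
    · exact hinteg.1.mono_set Ioo_subset_Ioc_self
    · exact (ae_restrict_mem measurableSet_Ioo).mono fun θ hθ ↦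
        div_nonneg (sin_pos_of_pos_of_lt_pi hθ.1 hθ.2).le (hg0 θ)
  rw [key (integral_sin_div_sqrt ha hr hne) fun _ ↦ sqrt_nonneg _,
    key (g := fun _ ↦ max a r) _ fun _ ↦ by positivity]
  rw [intervalIntegral.integral_div, integral_sin]
  norm_num

/-- Newton's theorem: for a nonnegative spherically symmetric integrable `σ` on `ℝ³`
(with `∫σ(y)|y|⁻¹dy < ∞`) and any `x ≠ 0`,
`∫σ(y)|x−y|⁻¹dy = ∫σ(y)/max(|x|,|y|) dy`. -/
theorem newton_theorem (σ : EuclideanSpace ℝ (Fin 3) → ℝ)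
    (hσm : Measurable σ) (hσ0 : ∀ y, 0 ≤ σ y)
    (hσrad : ∀ x y, ‖x‖ = ‖y‖ → σ x = σ y)
    (hσint : Integrable σ) (hσint' : Integrable (fun y => σ y / ‖y‖))
    (x : EuclideanSpace ℝ (Fin 3)) (hx : x ≠ 0) :
    ∫ y, σ y / ‖x - y‖ = ∫ y, σ y / max ‖x‖ ‖y‖ := by
  set a := ‖x‖ with ha_def
  have ha : 0 < a := norm_pos_iff.2 hx
  obtain ⟨b, hb⟩ : ∃ b : OrthonormalBasis (Fin 3) ℝ (EuclideanSpace ℝ (Fin 3)),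
      b 0 = a⁻¹ • x := by
    obtain ⟨b, hb⟩ := Orthonormal.exists_orthonormalBasis_extension_of_card_eq (𝕜 := ℝ)
      (E := EuclideanSpace ℝ (Fin 3)) (ι := Fin 3) (by simp)
      (v := fun _ ↦ a⁻¹ • x) (s := {0}) (by
        refine ⟨fun _ ↦ ?_, fun i j hij ↦ (hij (Subsingleton.elim i j)).elim⟩
        simp [norm_smul, ← ha_def, abs_of_pos ha, ha.ne'])
    exact ⟨b, hb 0 rfl⟩
  have hxb : x = b.repr.symm (EuclideanSpace.single 0 a) := by
    rw [b.repr.eq_symm_apply]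
    have : x = a • b 0 := by rw [hb, smul_smul, mul_inv_cancel₀ ha.ne', one_smul]
    rw [this, map_smul, b.repr_self]
    ext i
    simp
  have hsub (y : EuclideanSpace ℝ (Fin 3)) :
      ‖x - b.repr.symm y‖ = √((a - y 0) ^ 2 + (y 1 ^ 2 + y 2 ^ 2)) := by
    rw [hxb, ← map_sub, LinearIsometryEquiv.norm_map, EuclideanSpace.norm_eq, Fin.sum_univ_three]
    simp [add_assoc]
  have hnorm (y : EuclideanSpace ℝ (Fin 3)) : ‖y‖ = √(y 0 ^ 2 + (y 1 ^ 2 + y 2 ^ 2)) := by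
    rw [EuclideanSpace.norm_eq, Fin.sum_univ_three]
    simp [add_assoc]
  let s : ℝ → ℝ := fun r ↦ σ (r • b 0)
  have hs : Measurable s := hσm.comp (by fun_prop)
  have hs0 (r : ℝ) : 0 ≤ s r := hσ0 _
  have hσs (y : EuclideanSpace ℝ (Fin 3)) : σ (b.repr.symm y) = s ‖y‖ :=
    hσrad _ _ (by simp [norm_smul])
  rw [integral_eq_lintegral_of_nonneg_ae (.of_forall fun y ↦ div_nonneg (hσ0 y) (norm_nonneg _))
      (hσm.div (by fun_prop)).aestronglyMeasurable,
    integral_eq_lintegral_of_nonneg_ae (.of_forall fun y ↦ div_nonneg (hσ0 y) (by positivity))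
      (hσm.div (by fun_prop)).aestronglyMeasurable,
    ← b.measurePreserving_repr_symm.lintegral_comp
      (f := fun y ↦ ENNReal.ofReal (σ y / ‖x - y‖)) (by fun_prop),
    ← b.measurePreserving_repr_symm.lintegral_comp
      (f := fun y ↦ ENNReal.ofReal (σ y / max a ‖y‖)) (by fun_prop)]
  congr 1
  simp only [hsub, hσs, LinearIsometryEquiv.norm_map]
  simp only [hnorm]
  rw [lintegral_axisymmetric (F := fun p ↦
      ENNReal.ofReal (s √(p.1 ^ 2 + p.2) / √((a - p.1) ^ 2 + p.2))) (by fun_prop),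
    lintegral_axisymmetric (F := fun p ↦
      ENNReal.ofReal (s √(p.1 ^ 2 + p.2) / max a √(p.1 ^ 2 + p.2))) (by fun_prop)]
  have hne : ∀ᵐ r : ℝ, r ≠ a := by simp [ae_iff]
  refine setLIntegral_congr_fun_ae measurableSet_Ioi (hne.mono fun r hra (hr : 0 < r) ↦ ?_)
  have h1 (θ : ℝ) : (r * Real.cos θ) ^ 2 + (r * Real.sin θ) ^ 2 = r ^ 2 := by
    linear_combination r ^ 2 * Real.sin_sq_add_cos_sq θ
  have h2 (θ : ℝ) : (a - r * Real.cos θ) ^ 2 + (r * Real.sin θ) ^ 2 =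
      a ^ 2 + r ^ 2 - 2 * a * r * Real.cos θ := by
    linear_combination r ^ 2 * Real.sin_sq_add_cos_sq θ
  have hfactor (g : ℝ → ℝ) (hg : Measurable g) :
      ∫⁻ θ in Set.Ioo 0 Real.pi, ENNReal.ofReal (2 * Real.pi * r ^ 2 * Real.sin θ) *
        ENNReal.ofReal (s r / g θ) = ENNReal.ofReal (2 * Real.pi * r ^ 2 * s r) *
        ∫⁻ θ in Set.Ioo 0 Real.pi, ENNReal.ofReal (Real.sin θ / g θ) := by
    rw [← lintegral_const_mul _ (by fun_prop)]
    refine setLIntegral_congr_fun measurableSet_Ioo fun θ hθ ↦ ?_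
    have := Real.sin_pos_of_pos_of_lt_pi hθ.1 hθ.2
    have := hs0 r
    rw [← ENNReal.ofReal_mul (by positivity), ← ENNReal.ofReal_mul (by positivity)]
    ring_nf
  simp only [h1, h2, Real.sqrt_sq hr.le]
  rw [hfactor _ (by fun_prop), hfactor _ (by fun_prop), lintegral_sin_div_sqrt ha hr hra]
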